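/- Let m, n ≥ 1. Then ∑_P (−1)^{v(P)} = ε_{m,n} · T(m,n), where the sum runs over all perfect matchings P of the grid graph G(m,n) and v(P) denotes the number of vertical edges of P. (Weighting every vertical edge by −1 changes the matching count of the m-by-n grid by exactly the factor ε_{m,n}.) -/

import Mathlib

open Finset

/-- The m-by-n grid graph on `Fin m × Fin n`: vertices are adjacent iff they agree in
one coordinate and differ by exactly 1 in the other. -/
def grid (m n : ℕ) : SimpleGraph (Fin m × Fin n) :=
  SimpleGraph.fromRel (fun p q =>
    (p.1 = q.1 ∧ (p.2 : ℕ) + 1 = q.2) ∨ (p.2 = q.2 ∧ (p.1 : ℕ) + 1 = q.1))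

/-- A perfect matching: a set of edges of `G` such that every vertex belongs to
exactly one edge of the set. -/
def IsPM {V : Type*} (G : SimpleGraph V) (P : Finset (Sym2 V)) : Prop :=
  (∀ e ∈ P, e ∈ G.edgeSet) ∧ ∀ v : V, ∃! e, e ∈ P ∧ v ∈ e

/-- `T m n` is the number of perfect matchings of the m-by-n grid graph. -/
noncomputable def T (m n : ℕ) : ℕ :=
  {P : Finset (Sym2 (Fin m × Fin n)) | IsPM (grid m n) P}.ncard

open scoped Classical in
/-- The finset of all perfect matchings of a graph on a finite vertex type. -/
noncomputable def pmFinset {V : Type*} [Fintype V] [DecidableEq V]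
    (G : SimpleGraph V) : Finset (Finset (Sym2 V)) :=
  Finset.univ.filter (fun P => IsPM G P)

open scoped Classical in
/-- The number of vertical edges in `P` (edges whose endpoints differ in the
first, i.e. row, coordinate). -/
noncomputable def vert {m n : ℕ} (P : Finset (Sym2 (Fin m × Fin n))) : ℕ :=
  (P.filter (fun e => ∃ p q : Fin m × Fin n, e = s(p, q) ∧ p.1 ≠ q.1)).card

/-- The underlying graph of the signed graph `G(m,-k)`: all horizontal edges, and
vertical edges only in columns 1 through k (0-indexed). -/
def negGrid (m k : ℕ) : SimpleGraph (Fin m × Fin (k + 2)) :=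
  SimpleGraph.fromRel (fun p q =>
    (p.1 = q.1 ∧ (p.2 : ℕ) + 1 = q.2) ∨
    (p.2 = q.2 ∧ (p.1 : ℕ) + 1 = q.1 ∧ 1 ≤ (p.2 : ℕ) ∧ (p.2 : ℕ) ≤ k))

/-- The signed number of matchings `M(G(m,-k))`: every vertical edge has weight -1,
every horizontal edge weight +1. -/
noncomputable def Msigned (m k : ℕ) : ℤ :=
  ∑ P ∈ pmFinset (negGrid m k), (-1 : ℤ) ^ vert P

/-- ε_{m,n}: -1 if m ≡ 2 (mod 4) and n is odd, +1 otherwise. -/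
def eps (m n : ℕ) : ℤ := if m % 4 = 2 ∧ Odd n then -1 else 1

/-!
Colour the vertex in row `i` by the sign `(-1) ^ i`. The two ends of a horizontal edge have colours
with product `1`, and those of a vertical edge colours with product `-1`, so `(-1) ^ v(P)` is the
product of the colours over all vertices covered by `P`. A perfect matching covers every vertex
once, hence this sign is `(-1) ^ (m.choose 2 * n)` whatever `P` is. A perfect matching exists only
if `m * n` is even, and in that case the sign is `ε_{m,n}`.
-/

section PerfectMatching

variable {V : Type*} {G : SimpleGraph V} {P : Finset (Sym2 V)}

theorem mem_pmFinset [Fintype V] [DecidableEq V] : P ∈ pmFinset G ↔ IsPM G P := by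
  simp [pmFinset]

theorem ncard_setOf_isPM [Fintype V] [DecidableEq V] (G : SimpleGraph V) :
    {P : Finset (Sym2 V) | IsPM G P}.ncard = #(pmFinset G) := by
  rw [← Set.ncard_coe_finset]
  congr 1
  ext P
  exact mem_pmFinset.symm

namespace IsPM

theorem card_filter_mem_eq_one [DecidableEq V] (hP : IsPM G P) (v : V) : #{e ∈ P | v ∈ e} = 1 := by
  simpa only [card_eq_one_iff_existsUnique, mem_filter] using hP.2 v

@[to_additive]
theorem prod_prod_toFinset [Fintype V] [DecidableEq V] {M : Type*} [CommMonoid M]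
    (hP : IsPM G P) (f : V → M) :
    ∏ e ∈ P, ∏ v ∈ e.toFinset, f v = ∏ v, f v :=
  calc
    ∏ e ∈ P, ∏ v ∈ e.toFinset, f v = ∏ v, ∏ e ∈ P with v ∈ e, f v :=
      prod_comm' (by simp)
    _ = ∏ v, f v := by simp only [prod_const, hP.card_filter_mem_eq_one, pow_one]

theorem two_mul_card [Fintype V] (hP : IsPM G P) : 2 * #P = Fintype.card V := by
  classical
  calc
    2 * #P = ∑ e ∈ P, #e.toFinset := by
      rw [sum_congr rfl fun e he ↦
        e.card_toFinset_of_not_isDiag (G.not_isDiag_of_mem_edgeSet (hP.1 e he))]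
      simp only [sum_const, smul_eq_mul, mul_comm]
    _ = ∑ v : V, 1 := by simp only [card_eq_sum_ones, hP.sum_sum_toFinset]
    _ = Fintype.card V := Fintype.card_eq_sum_ones.symm

theorem even_card [Fintype V] (hP : IsPM G P) : Even (Fintype.card V) :=
  hP.two_mul_card ▸ even_two_mul #P

end IsPM

end PerfectMatching

section Grid

variable {m n : ℕ}

theorem vert_eq_card_filter_not_isDiag (P : Finset (Sym2 (Fin m × Fin n))) :
    vert P = #{e ∈ P | ¬ (e.map Prod.fst).IsDiag} := by
  classical
  have exists_iff (e : Sym2 (Fin m × Fin n)) :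
      (∃ p q, e = s(p, q) ∧ p.1 ≠ q.1) ↔ ¬ (e.map Prod.fst).IsDiag := by
    constructor
    · rintro ⟨p, q, rfl, hpq⟩
      exact hpq
    · induction e with
      | _ p q => exact fun hpq ↦ ⟨p, q, rfl, hpq⟩
  simp only [vert, exists_iff]

theorem neg_one_pow_vert_eq_prod (P : Finset (Sym2 (Fin m × Fin n))) :
    (-1 : ℤ) ^ vert P = ∏ e ∈ P, if (e.map Prod.fst).IsDiag then 1 else -1 := by
  rw [vert_eq_card_filter_not_isDiag, prod_ite, prod_const_one, prod_const, one_mul]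

theorem val_fst_add_one_eq_of_grid_adj {p q : Fin m × Fin n} (hadj : (grid m n).Adj p q)
    (hrow : p.1 ≠ q.1) : (p.1 : ℕ) + 1 = q.1 ∨ (q.1 : ℕ) + 1 = p.1 := by
  simp only [grid, SimpleGraph.fromRel_adj] at hadj
  grind

theorem prod_toFinset_neg_one_pow_row {e : Sym2 (Fin m × Fin n)} (he : e ∈ (grid m n).edgeSet) :
    ∏ v ∈ e.toFinset, (-1 : ℤ) ^ (v.1 : ℕ) = if (e.map Prod.fst).IsDiag then 1 else -1 := by
  induction e with
  | _ p q =>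
    have hadj : (grid m n).Adj p q := he
    rw [Sym2.toFinset_mk_eq, prod_pair hadj.ne, ← pow_add]
    simp only [Sym2.map_mk, Sym2.mk_isDiag_iff]
    split_ifs with hrow
    · exact Even.neg_one_pow ⟨p.1, by rw [hrow]⟩
    · apply Odd.neg_one_pow
      rcases val_fst_add_one_eq_of_grid_adj hadj hrow with hq | hp
      · exact ⟨p.1, by omega⟩
      · exact ⟨q.1, by omega⟩

theorem prod_neg_one_pow_row (m n : ℕ) :
    ∏ v : Fin m × Fin n, (-1 : ℤ) ^ (v.1 : ℕ) = (-1) ^ (m.choose 2 * n) := by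
  have sum_rows : ∑ i : Fin m, (i : ℕ) = m.choose 2 := by
    rw [Fin.sum_univ_eq_sum_range (fun i ↦ i), sum_range_id, Nat.choose_two_right]
  rw [Fintype.prod_prod_type]
  simp only [prod_const, card_univ, Fintype.card_fin, prod_pow, prod_pow_eq_pow_sum, sum_rows,
    pow_mul]

theorem IsPM.neg_one_pow_vert {P : Finset (Sym2 (Fin m × Fin n))} (hP : IsPM (grid m n) P) :
    (-1 : ℤ) ^ vert P = (-1) ^ (m.choose 2 * n) :=
  calc
    (-1 : ℤ) ^ vert P = ∏ e ∈ P, if (e.map Prod.fst).IsDiag then 1 else -1 :=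
      neg_one_pow_vert_eq_prod P
    _ = ∏ e ∈ P, ∏ v ∈ e.toFinset, (-1) ^ (v.1 : ℕ) :=
      prod_congr rfl fun e he ↦ (prod_toFinset_neg_one_pow_row (hP.1 e he)).symm
    _ = ∏ v : Fin m × Fin n, (-1) ^ (v.1 : ℕ) := hP.prod_prod_toFinset _
    _ = (-1) ^ (m.choose 2 * n) := prod_neg_one_pow_row m n

end Grid

theorem odd_choose_two_iff (m : ℕ) : Odd (m.choose 2) ↔ m % 4 = 2 ∨ m % 4 = 3 := by
  induction m with
  | zero => simp
  | succ m ih =>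
    rw [Nat.choose_succ_succ m 1, Nat.choose_one_right]
    simp only [Nat.odd_iff, Nat.succ_eq_add_one, Nat.reduceAdd] at ih ⊢
    omega

theorem neg_one_pow_choose_two_mul {m n : ℕ} (hmn : Even (m * n)) :
    (-1 : ℤ) ^ (m.choose 2 * n) = eps m n := by
  have odd_iff : Odd (m.choose 2 * n) ↔ m % 4 = 2 ∧ Odd n := by
    rw [Nat.odd_mul, odd_choose_two_iff]
    grind
  simp only [eps, ← odd_iff, neg_one_pow_eq_ite, ← Nat.not_odd_iff_even, ite_not]

/-- Weighting every vertical edge by −1 changes the matching count of the m-by-n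
grid by exactly the factor ε_{m,n}. -/
theorem signed_count_of_grid (m n : ℕ) (hm : 1 ≤ m) (hn : 1 ≤ n) :
    ∑ P ∈ pmFinset (grid m n), (-1 : ℤ) ^ vert P = eps m n * (T m n : ℤ) := by
  calc
    ∑ P ∈ pmFinset (grid m n), (-1 : ℤ) ^ vert P = ∑ _P ∈ pmFinset (grid m n), eps m n :=
      sum_congr rfl fun P hP ↦ by
        have hPM : IsPM (grid m n) P := mem_pmFinset.mp hP
        have hmn : Even (m * n) := by simpa using hPM.even_card
        rw [hPM.neg_one_pow_vert, neg_one_pow_choose_two_mul hmn]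
    _ = eps m n * T m n := by
      rw [sum_const, nsmul_eq_mul, mul_comm, T, ncard_setOf_isPM]
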